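/- Let u_h ∈ V_h solve the CIP-FEM scheme. Then: (i) ‖∇u_h‖²_{L²(Ω)} − k²·‖u_h‖²_{L²(Ω)} ≤ 2·‖f‖_{L²(Ω)}·‖u_h‖_{L²(Ω)} + (1/k)·‖g‖²_{L²(Γ)}, and (ii) Σ_{e∈ℰ_h^I} γ_e·(h_e/p²)·‖[∂u_h/∂n_e]‖²_{L²(e)} + k·‖u_h‖²_{L²(Γ)} ≤ 2·‖f‖_{L²(Ω)}·‖u_h‖_{L²(Ω)} + (1/k)·‖g‖²_{L²(Γ)}. -/

import Mathlib

noncomputable section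

open scoped BigOperators ComplexConjugate

/-- The complex `L²`-pairing written with the convention of the paper:
`pip x y` is linear in `x` and conjugate-linear in `y`. -/
def pip {H : Type} [NormedAddCommGroup H] [InnerProductSpace ℂ H] (x y : H) : ℂ :=
  @inner ℂ _ _ y x

/-- `x ≃ y`: the two quantities are comparable with constants `c₁, c₂`. -/
def Comparable (c₁ c₂ x y : ℝ) : Prop := c₁ * y ≤ x ∧ x ≤ c₂ * y

/-- Abstract functional-analytic skeleton associated with the bounded, strictly
star-shaped domain `Ω ⊂ ℝ^d` (`d = 2, 3`) with analytic boundary `Γ`: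
the energy space `V`, realizations of the `L²(Ω)`, `H¹(Ω)`-gradient and `L²(Γ)`-trace
pairings through linear maps into Hilbert spaces, the scale of Sobolev norms
`‖·‖_{H^s(Ω)}`, the norms `‖∇ⁿ·‖_{L²(Ω)}` of the total derivatives, and the
`H^{1/2}(Γ)` norm of boundary data. -/
structure SpaceSkeleton where
  /-- the space dimension -/
  d : ℕ
  hd : d = 2 ∨ d = 3
  /-- the energy space `V ⊃ H¹(Ω) ∩ ∏_K H²(K)` -/
  V : Type
  [instAddCommGroup : AddCommGroup V]
  [instModule : Module ℂ V]
  /-- Hilbert space realizing `L²(Ω)` -/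
  H0 : Type
  [instH0 : NormedAddCommGroup H0]
  [instH0i : InnerProductSpace ℂ H0]
  /-- Hilbert space receiving gradients -/
  HG : Type
  [instHG : NormedAddCommGroup HG]
  [instHGi : InnerProductSpace ℂ HG]
  /-- Hilbert space realizing `L²(Γ)` -/
  HB : Type
  [instHB : NormedAddCommGroup HB]
  [instHBi : InnerProductSpace ℂ HB]
  /-- the embedding `V → L²(Ω)`; `‖ι v‖ = ‖v‖_{L²(Ω)}` and `pip (ι u) (ι v) = (u,v)_Ω` -/
  ι : V →ₗ[ℂ] H0
  /-- the (broken) gradient; `‖grad v‖ = ‖∇v‖_{L²(Ω)}` and `pip (grad u) (grad v) = (∇u,∇v)_Ω` -/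
  grad : V →ₗ[ℂ] HG
  /-- the boundary trace; `‖tr v‖ = ‖v‖_{L²(Γ)}` and `pip (tr u) (tr v) = ⟨u,v⟩_Γ` -/
  tr : V →ₗ[ℂ] HB
  /-- `sob s v = ‖v‖_{H^s(Ω)}` -/
  sob : ℝ → V → ℝ
  /-- `memHs s v` means `v ∈ H^s(Ω)` -/
  memHs : ℝ → V → Prop
  /-- `gradN n v = ‖∇ⁿ v‖_{L²(Ω)}`, where `|∇ⁿu(x)|² = ∑_{|α|=n} (n!/α!)|D^α u(x)|²` -/
  gradN : ℕ → V → ℝ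
  /-- `h12 g = ‖g‖_{H^{1/2}(Γ)}` -/
  h12 : HB → ℝ

attribute [instance] SpaceSkeleton.instAddCommGroup SpaceSkeleton.instModule
  SpaceSkeleton.instH0 SpaceSkeleton.instH0i SpaceSkeleton.instHG SpaceSkeleton.instHGi
  SpaceSkeleton.instHB SpaceSkeleton.instHBi

namespace SpaceSkeleton

variable (S : SpaceSkeleton)

/-- `u` is a (variational) solution of the Helmholtz problem
`-Δu - k²u = f` in `Ω`, `∂u/∂n + iku = g` on `Γ`:
`(∇u,∇v)_Ω - k²(u,v)_Ω + ik⟨u,v⟩_Γ = (f,v)_Ω + ⟨g,v⟩_Γ` for all `v ∈ V`. -/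
def IsHelmholtzSolution (k : ℝ) (f : S.H0) (g : S.HB) (u : S.V) : Prop :=
  ∀ v : S.V,
    pip (S.grad u) (S.grad v) - (k : ℂ) ^ 2 * pip (S.ι u) (S.ι v)
        + Complex.I * (k : ℂ) * pip (S.tr u) (S.tr v)
      = pip f (S.ι v) + pip g (S.tr v)

/-- `C_{f,g} = ‖f‖_{L²(Ω)} + ‖g‖_{H^{1/2}(Γ)}`. -/
def Cfg (f : S.H0) (g : S.HB) : ℝ := ‖f‖ + S.h12 g

end SpaceSkeleton

/-- Abstract data of the curvilinear simplicial triangulation `𝒯_h` of `Ω`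
(no hanging nodes, element maps satisfying Assumption 5.1 of Melenk–Sauter (2011)),
of the conforming `hp`-finite element space `V_h`, and of the parameters
`k, h, p` and penalty parameters `γ_e ≃ γ`:  `E` is the set of interior
edges/faces `ℰ_h^I`, and `jump e` realizes the jump `[∂·/∂n_e]` of the normal
derivative across `e`, so that `‖jump e v‖ = ‖[∂v/∂n_e]‖_{L²(e)}`. -/
structure MeshData (S : SpaceSkeleton) where
  /-- polynomial degree -/
  p : ℕ
  hp : 1 ≤ p
  /-- wave number -/
  k : ℝ
  /-- mesh size `h = max_K diam K` -/
  h : ℝ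
  /-- penalty parameter -/
  γ : ℝ
  /-- the set of interior edges/faces `ℰ_h^I` -/
  E : Type
  [instE : Fintype E]
  /-- Hilbert space realizing the `L²(e)` spaces -/
  HE : Type
  [instHE : NormedAddCommGroup HE]
  [instHEi : InnerProductSpace ℂ HE]
  /-- `jump e v = [∂v/∂n_e]` -/
  jump : E → S.V →ₗ[ℂ] HE
  /-- `h_e = diam e` -/
  he : E → ℝ
  /-- the penalty parameters `γ_e` -/
  γe : E → ℝ
  /-- the conforming finite element space `V_h ⊂ V` -/
  Vh : Submodule ℂ S.V

attribute [instance] MeshData.instE MeshData.instHE MeshData.instHEi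

namespace MeshData

variable {S : SpaceSkeleton} (M : MeshData S)

/-- the penalty jump form `J(u,v) = ∑_e iγ_e (h_e/p²) ⟨[∂u/∂n_e],[∂v/∂n_e]⟩_e`. -/
def Jf (u v : S.V) : ℂ :=
  ∑ e : M.E, Complex.I * (M.γe e : ℂ) * ((M.he e / (M.p : ℝ) ^ 2 : ℝ) : ℂ)
      * pip (M.jump e u) (M.jump e v)

/-- `a_h(u,v) = a_h^+(u,v) = (∇u,∇v)_Ω + J(u,v)`. -/
def ah (u v : S.V) : ℂ := pip (S.grad u) (S.grad v) + M.Jf u v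

/-- `a_h^-(u,v) = (∇u,∇v)_Ω - J(u,v)`. -/
def ahm (u v : S.V) : ℂ := pip (S.grad u) (S.grad v) - M.Jf u v

/-- `‖v‖_{1,h}² = ‖∇v‖²_{L²(Ω)} + ∑_e γ_e (h_e/p²) ‖[∂v/∂n_e]‖²_{L²(e)}`. -/
def norm1h (v : S.V) : ℝ :=
  Real.sqrt (‖S.grad v‖ ^ 2
    + ∑ e : M.E, M.γe e * (M.he e / (M.p : ℝ) ^ 2) * ‖M.jump e v‖ ^ 2)

/-- `|||v|||² = ‖v‖²_{1,h} + k ‖v‖²_{L²(Γ)}`. -/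
def tnorm (v : S.V) : ℝ := Real.sqrt (M.norm1h v ^ 2 + M.k * ‖S.tr v‖ ^ 2)

/-- `C_err = (1 + γ + kh/p)^{1/2}`. -/
def Cerr : ℝ := Real.sqrt (1 + M.γ + M.k * M.h / (M.p : ℝ))

/-- `C_p = p^{(d-3)/2}` (simplicial triangulations, `d = 2, 3`). -/
def Cp : ℝ := (M.p : ℝ) ^ (((S.d : ℝ) - 3) / 2)

/-- `C_sta = 1 + (1/k)(γp⁴/h² + p⁶C_p²/(γh²))`. -/
def Csta : ℝ :=
  1 + (1 / M.k) * (M.γ * (M.p : ℝ) ^ 4 / M.h ^ 2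
      + (M.p : ℝ) ^ 6 * M.Cp ^ 2 / (M.γ * M.h ^ 2))

/-- `u_h ∈ V_h` solves the CIP-FEM scheme
`a_h(u_h,v_h) - k²(u_h,v_h)_Ω + ik⟨u_h,v_h⟩_Γ = (f,v_h)_Ω + ⟨g,v_h⟩_Γ` for all `v_h ∈ V_h`. -/
def IsFEMSolution (f : S.H0) (g : S.HB) (uh : S.V) : Prop :=
  uh ∈ M.Vh ∧ ∀ v ∈ M.Vh,
    M.ah uh v - (M.k : ℂ) ^ 2 * pip (S.ι uh) (S.ι v)
        + Complex.I * (M.k : ℂ) * pip (S.tr uh) (S.tr v)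
      = pip f (S.ι v) + pip g (S.tr v)

/-- `u ∈ H²(Ω)` is the exact solution of the Helmholtz problem, viewed in the broken
setting: its interelement normal-derivative jumps vanish and it satisfies the
variational identity (2.6). -/
def IsExactSolution (f : S.H0) (g : S.HB) (u : S.V) : Prop :=
  (∀ e : M.E, M.jump e u = 0) ∧ S.IsHelmholtzSolution M.k f g u

/-- the elliptic projection `u_h^+ ∈ V_h` of `u`:
`a_h(u_h^+, v_h) + ik⟨u_h^+, v_h⟩_Γ = a_h(u, v_h) + ik⟨u, v_h⟩_Γ` for all `v_h ∈ V_h`. -/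
def IsProjPlus (u uhp : S.V) : Prop :=
  uhp ∈ M.Vh ∧ ∀ v ∈ M.Vh,
    M.ah uhp v + Complex.I * (M.k : ℂ) * pip (S.tr uhp) (S.tr v)
      = M.ah u v + Complex.I * (M.k : ℂ) * pip (S.tr u) (S.tr v)

/-- the elliptic projection `u_h^- ∈ V_h` of `u`:
`a_h(v_h, u_h^-) + ik⟨v_h, u_h^-⟩_Γ = a_h(v_h, u) + ik⟨v_h, u⟩_Γ` for all `v_h ∈ V_h`
(written, equivalently, after conjugation, through `a_h^-` and `-ik`). -/
def IsProjMinus (u uhm : S.V) : Prop :=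
  uhm ∈ M.Vh ∧ ∀ v ∈ M.Vh,
    M.ahm uhm v - Complex.I * (M.k : ℂ) * pip (S.tr uhm) (S.tr v)
      = M.ahm u v - Complex.I * (M.k : ℂ) * pip (S.tr u) (S.tr v)

/-- the standing assumptions of the paper: `k ≳ 1`, `h > 0`, `γ ≥ 0`, `γ_e ≥ 0`,
`h_e ≃ h` and `γ_e ≃ γ` (with comparability constants `c₁, c₂`). -/
def Admissible (c₁ c₂ : ℝ) : Prop :=
  1 ≤ M.k ∧ 0 < M.h ∧ 0 ≤ M.γ ∧ (∀ e : M.E, 0 ≤ M.γe e) ∧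
  (∀ e : M.E, Comparable c₁ c₂ (M.he e) M.h) ∧
  (∀ e : M.E, Comparable c₁ c₂ (M.γe e) M.γ)

/-- `inf_{z_h ∈ V_h} |||u - z_h|||`. -/
def bestApprox (u : S.V) : ℝ := ⨅ z : M.Vh, M.tnorm (u - (z : S.V))

end MeshData

theorem pip_self {H : Type} [NormedAddCommGroup H] [InnerProductSpace ℂ H] (x : H) :
    pip x x = ((‖x‖ ^ 2 : ℝ) : ℂ) := by
  simp [pip, inner_self_eq_norm_sq_to_K]

theorem norm_pip_le {H : Type} [NormedAddCommGroup H] [InnerProductSpace ℂ H] (x y : H) :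
    ‖pip x y‖ ≤ ‖x‖ * ‖y‖ := by
  simpa [pip, mul_comm] using norm_inner_le_norm (𝕜 := ℂ) y x

/-- Young's inequality with weight `k`. -/
theorem two_mul_le_inv_mul_sq_add_mul_sq {k : ℝ} (hk : 0 < k) (a b : ℝ) :
    2 * (a * b) ≤ 1 / k * a ^ 2 + k * b ^ 2 := by
  have h : 0 ≤ 1 / k * (a - k * b) ^ 2 := by positivity
  have heq : 1 / k * (a - k * b) ^ 2 = 1 / k * a ^ 2 + k * b ^ 2 - 2 * (a * b) := by
    field_simp
    ring
  linarith

/-- Lemma 5.4: basic bounds for the CIP-FEM solution.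
If `u_h ∈ V_h` solves the CIP-FEM scheme, then
`‖∇u_h‖²_{L²(Ω)} - k²‖u_h‖²_{L²(Ω)} ≤ 2‖f‖_{L²(Ω)}‖u_h‖_{L²(Ω)} + (1/k)‖g‖²_{L²(Γ)}`
and
`∑_e γ_e (h_e/p²)‖[∂u_h/∂n_e]‖²_{L²(e)} + k‖u_h‖²_{L²(Γ)}
  ≤ 2‖f‖_{L²(Ω)}‖u_h‖_{L²(Ω)} + (1/k)‖g‖²_{L²(Γ)}`. -/
theorem cip_fem_basic_bounds (S : SpaceSkeleton) (M : MeshData S)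
    (hk : 0 < M.k) (hγe : ∀ e : M.E, 0 ≤ M.γe e) (hhe : ∀ e : M.E, 0 ≤ M.he e)
    (f : S.H0) (g : S.HB) (uh : S.V) (huh : M.IsFEMSolution f g uh) :
    ‖S.grad uh‖ ^ 2 - M.k ^ 2 * ‖S.ι uh‖ ^ 2
        ≤ 2 * ‖f‖ * ‖S.ι uh‖ + (1 / M.k) * ‖g‖ ^ 2 ∧
    (∑ e : M.E, M.γe e * (M.he e / (M.p : ℝ) ^ 2) * ‖M.jump e uh‖ ^ 2)
        + M.k * ‖S.tr uh‖ ^ 2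
        ≤ 2 * ‖f‖ * ‖S.ι uh‖ + (1 / M.k) * ‖g‖ ^ 2 := by
  obtain ⟨hmem, hsol⟩ := huh
  have henergy := hsol uh hmem
  simp only [MeshData.ah, MeshData.Jf, pip_self] at henergy
  have hre := congrArg Complex.re henergy
  have him := congrArg Complex.im henergy
  simp only [← Complex.ofReal_pow, ← Complex.ofReal_mul, mul_assoc, ← Finset.mul_sum,
    ← Complex.ofReal_sum, Complex.add_re, Complex.sub_re, Complex.add_im, Complex.sub_im,
    Complex.re_mul_ofReal, Complex.im_mul_ofReal, Complex.ofReal_re, Complex.ofReal_im,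
    Complex.I_re, Complex.I_im, zero_mul, one_mul, add_zero, zero_add, sub_zero] at hre him
  have hf := norm_pip_le f (S.ι uh)
  have hg := norm_pip_le g (S.tr uh)
  have hfre := (Complex.re_le_norm _).trans hf
  have hgre := (Complex.re_le_norm _).trans hg
  have hfim := (Complex.im_le_norm _).trans hf
  have hgim := (Complex.im_le_norm _).trans hg
  have hyoung := two_mul_le_inv_mul_sq_add_mul_sq hk ‖g‖ ‖S.tr uh‖
  have hJ : 0 ≤ ∑ e : M.E, M.γe e * (M.he e / (M.p : ℝ) ^ 2 * ‖M.jump e uh‖ ^ 2) :=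
    Finset.sum_nonneg fun e _ =>
      mul_nonneg (hγe e) (mul_nonneg (div_nonneg (hhe e) (sq_nonneg _)) (sq_nonneg _))
  simp only [mul_assoc]
  constructor <;> linarith
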